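/- If there exists a recoverable wait-free binary consensus algorithm for n > 1 processes p_0,…,p_{n−1} using objects of deterministic types 𝒯_0, 𝒯_1, 𝒯_2, …, then at least one of the types 𝒯_i is n-recording. -/

import Mathlib

/-!
The proof is a valency argument in which crashes are rationed.  A configuration comes with a crash
budget for each process: a crash of `p_j` uses up a unit of the budget of `p_j`, and a step of
`p_i` resets the budgets of all `p_j` with `j > i` to arbitrary values, so that `p_0` never crashes
(`Leg`, `Can`, `Biv`).

A move is a legal event or, more generally, a block containing a step of some `p_i` (the payer)
in which only processes `p_j` with `j > i` crash, even if these crashes precede the step that pays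
for them.  There is no infinite sequence of moves between bivalent pairs: the smallest process
that pays infinitely often would take infinitely many steps and crash finitely often, hence decide
(`no_infinite_moves`, `exists_no_move`).  A bivalent pair without a bivalent move is critical.
There each process belongs to a team, the value to which its next step commits, and both teams are
nonempty.  All processes are poised at the same object `O`, since steps on different objects commute.
The value of `O`, the pending operations and the teams show that the type of `O` is `n`-recording
unless one of two obstructions occurs (`Crit.cases`):

* `Merging`: the step of `p_{n-1}` alone leads to the same object values as some schedule that
  contains `p_0` and starts on the other team (every other coincidence is excluded by letting
  `p_0` or a freshly crashed `p_{n-1}` run alone);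
* `Hiding`: some schedule starting on team `x` restores the objects, and the other team has two
  members `i₀ < i₁`.

In either case a crash of `p_k, …, p_{n-1}` (with `k = n - 1` after the step of `p_{n-1}`,
respectively `k = i₁`) leads to a bivalent configuration from which `p_k, …, p_{n-1}` by
themselves, with unlimited crashes, never decide some value `v` (`NoDec`).  Among the bivalent
pairs reached from the critical configuration by events of `p_k, …, p_{n-1}` and retaining this
property, choose one without a move to another.  It is again critical, because a step of some
`p_i` with `i < k` pays for all crashes since the first critical configuration.  There, `Merging`
and `Hiding` by team `v` would let `p_{n-1}` decide `v`, and `Hiding` by team `!v` yields the same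
situation with a smaller `k`.  Hence the descent on `k` ends with an `n`-recording type
(`nRecording_of_restricted`).
-/

namespace RecoverableConsensus

/-- A deterministic object type: a set of values, operations and responses together with a
transition function assigning to each (value, operation) pair a unique response and a unique
resulting value. -/
structure DetType : Type 1 where
  Value : Type
  Op : Type
  Resp : Type
  δ : Value → Op → Resp × Value

/-- A type is readable if it has a Read operation that returns (an injective encoding of)
the current value of the object without changing it. -/
def Readable (T : DetType) : Prop :=
  ∃ (read : T.Op) (ι : T.Value → T.Resp),
    Function.Injective ι ∧ ∀ v, T.δ v read = (ι v, v)

/-- The register type over the value set `V`: the operation `none` is Read (returning the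
current value without changing it) and `some v` is Write(v) (changing the value to `v`). -/
def RegisterType (V : Type) : DetType where
  Value := V
  Op := Option V
  Resp := V
  δ := fun u op =>
    match op with
    | none => (u, u)
    | some v => (v, v)

def IsRegister (T : DetType) : Prop := ∃ V : Type, T = RegisterType V

/-- An event is either a step by a process or a crash of a process. -/
inductive Event (n : ℕ) : Type where
  | step : Fin n → Event n
  | crash : Fin n → Event n
deriving DecidableEq

/-- An algorithm for `n` processes: a collection of shared objects, each with a deterministic
type and an initial value, and for each process a deterministic state machine with an initial
state depending on the process's binary input.  Each state determines the process's next step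
(`pending`: an operation applied to a designated object, or `none` for a no-op); the state
reached after a step is determined by the current state and the response received (`next`).
`output i s = some v` means that `s` is an output state of process `i` for the value `v`;
processes in output states take only no-op steps. -/
structure Algorithm (n : ℕ) : Type 1 where
  ObjIdx : Type
  objType : ObjIdx → DetType
  objInit : (o : ObjIdx) → (objType o).Value
  PState : Fin n → Type
  init : (i : Fin n) → Bool → PState i
  pending : (i : Fin n) → PState i → Option ((o : ObjIdx) × (objType o).Op)
  next : (i : Fin n) → PState i → (o : ObjIdx) → (objType o).Resp → PState i
  output : (i : Fin n) → PState i → Option Bool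
  output_noop : ∀ i s, output i s ≠ none → pending i s = none

/-- A configuration assigns a state to each process and a value to each object. -/
structure Config {n : ℕ} (A : Algorithm n) : Type where
  pstate : (i : Fin n) → A.PState i
  oval : (o : A.ObjIdx) → (A.objType o).Value

variable {n : ℕ}

/-- The effect of one event on a configuration.  A crash of `p_i` resets `p_i` to its initial
state (for its input) and leaves all object values unchanged; a step of `p_i` applies its
pending operation (if any) to the designated object, receiving the response determined by the
type's transition function. -/
noncomputable def applyEvent (A : Algorithm n) (input : Fin n → Bool) (C : Config A) :
    Event n → Config A
  | .crash i => { C with pstate := Function.update C.pstate i (A.init i (input i)) }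
  | .step i =>
    letI : DecidableEq A.ObjIdx := Classical.decEq _
    match A.pending i (C.pstate i) with
    | none => C
    | some ⟨o, op⟩ =>
      { pstate := Function.update C.pstate i
          (A.next i (C.pstate i) o ((A.objType o).δ (C.oval o) op).1),
        oval := Function.update C.oval o ((A.objType o).δ (C.oval o) op).2 }

/-- Since the algorithm is deterministic, a finite execution from `C` is determined by its
schedule, i.e. its list of events; `run A input C σ` is the configuration `Cσ` reached by
applying the events of `σ` in order from `C`. -/
noncomputable def run (A : Algorithm n) (input : Fin n → Bool) (C : Config A) :
    List (Event n) → Config A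
  | [] => C
  | e :: σ => run A input (applyEvent A input C e) σ

/-- The initial configuration: every process in its initial state, every object at its
initial value. -/
def initConfig (A : Algorithm n) (input : Fin n → Bool) : Config A :=
  ⟨fun i => A.init i (input i), A.objInit⟩

/-- Process `i` has decided `v` in `Cσ`: at some point along the execution `σ` from `C`,
process `i` was in an output state for `v`. -/
def HasDecided (A : Algorithm n) (input : Fin n → Bool) (C : Config A)
    (σ : List (Event n)) (i : Fin n) (v : Bool) : Prop :=
  ∃ τ, τ <+: σ ∧ A.output i ((run A input C τ).pstate i) = some v

def CrashFree (σ : List (Event n)) : Prop := ∀ i : Fin n, Event.crash i ∉ σ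

/-- The first `k` events of an infinite execution. -/
def initSeg (e : ℕ → Event n) (k : ℕ) : List (Event n) := (List.range k).map e

/-- Agreement: in every execution no two processes decide different values. -/
def Agreement (A : Algorithm n) : Prop :=
  ∀ (input : Fin n → Bool) (σ : List (Event n)) (i j : Fin n) (v w : Bool),
    HasDecided A input (initConfig A input) σ i v →
    HasDecided A input (initConfig A input) σ j w → v = w

/-- Validity: every decided value is the input of some process. -/
def Validity (A : Algorithm n) : Prop :=
  ∀ (input : Fin n → Bool) (σ : List (Event n)) (i : Fin n) (v : Bool),
    HasDecided A input (initConfig A input) σ i v → ∃ j, input j = v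

/-- Recoverable wait-freedom: every process, starting from its initial state, either crashes
or decides within a finite number of its own steps.  Equivalently: in every infinite execution
in which process `i` starts at (or is reset by a crash to) its initial state, takes infinitely
many steps and crashes only finitely often, it eventually reaches an output state. -/
def RecWaitFree (A : Algorithm n) : Prop :=
  ∀ (input : Fin n → Bool) (C : Config A) (e : ℕ → Event n) (i : Fin n),
    (C.pstate i = A.init i (input i) ∨ ∃ k, e k = Event.crash i) →
    (∀ m, ∃ k, m ≤ k ∧ e k = Event.step i) →
    (∃ m, ∀ k, m ≤ k → e k ≠ Event.crash i) →
    ∃ (k : ℕ) (v : Bool), A.output i ((run A input C (initSeg e k)).pstate i) = some v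

/-- A recoverable wait-free binary consensus algorithm. -/
def SolvesRecConsensus (A : Algorithm n) : Prop :=
  Agreement A ∧ Validity A ∧ RecWaitFree A

/-- Agreement restricted to crash-free executions. -/
def AgreementCF (A : Algorithm n) : Prop :=
  ∀ (input : Fin n → Bool) (σ : List (Event n)), CrashFree σ →
    ∀ (i j : Fin n) (v w : Bool),
      HasDecided A input (initConfig A input) σ i v →
      HasDecided A input (initConfig A input) σ j w → v = w

/-- Validity restricted to crash-free executions. -/
def ValidityCF (A : Algorithm n) : Prop :=
  ∀ (input : Fin n → Bool) (σ : List (Event n)), CrashFree σ →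
    ∀ (i : Fin n) (v : Bool),
      HasDecided A input (initConfig A input) σ i v → ∃ j, input j = v

/-- Wait-freedom: in crash-free executions, every process that takes infinitely many steps
decides. -/
def WaitFree (A : Algorithm n) : Prop :=
  ∀ (input : Fin n → Bool) (e : ℕ → Event n),
    (∀ (k : ℕ) (i : Fin n), e k ≠ Event.crash i) →
    ∀ i : Fin n, (∀ m, ∃ k, m ≤ k ∧ e k = Event.step i) →
    ∃ (k : ℕ) (v : Bool),
      A.output i ((run A input (initConfig A input) (initSeg e k)).pstate i) = some v

/-- A wait-free binary consensus algorithm (for the model in which crashes are permanent,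
i.e. only crash-free executions are relevant). -/
def SolvesWFConsensus (A : Algorithm n) : Prop :=
  AgreementCF A ∧ ValidityCF A ∧ WaitFree A

/-- The number of crashes of process `i` in `σ`. -/
def crashCount (i : Fin n) (σ : List (Event n)) : ℕ :=
  (σ.filter fun e => decide (e = Event.crash i)).length

def isStepBelow (i : Fin n) : Event n → Bool
  | .step j => decide (j < i)
  | .crash _ => false

/-- The total number of steps taken by processes `p_0, …, p_{i-1}` in `σ`. -/
def stepsBelow (i : Fin n) (σ : List (Event n)) : ℕ := (σ.filter (isStepBelow i)).length

/-- The crash bound: for every process `p_i`, the number of crashes of `p_i` is at most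
`z·n` times the total number of steps of `p_0, …, p_{i-1}` (for `i = 0` this says that `p_0`
never crashes). -/
def EMem (z : ℕ) (σ : List (Event n)) : Prop :=
  ∀ i : Fin n, crashCount i σ ≤ z * n * stepsBelow i σ

/-- `𝓔_z`: executions satisfying the crash bound. -/
def ESet (n z : ℕ) : Set (List (Event n)) := { σ | EMem z σ }

/-- `𝓔*_z`: executions satisfying the crash bound in every prefix. -/
def EStarSet (n z : ℕ) : Set (List (Event n)) := { σ | ∀ τ, τ <+: σ → EMem z τ }

/-- `e` is an event by a process in `P`. -/
def eventBy (P : Set (Fin n)) : Event n → Prop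
  | .step i => i ∈ P
  | .crash i => i ∈ P

/-- The set of processes `P` is `v`-univalent in the execution `α` from `C` with respect to
the set of executions `𝒜`. -/
def VUnivalentIn (A : Algorithm n) (input : Fin n → Bool) (C : Config A)
    (𝒜 : Set (List (Event n))) (P : Set (Fin n)) (α : List (Event n)) (v : Bool) : Prop :=
  α ∈ 𝒜 ∧ ∀ β : List (Event n), (∀ e ∈ β, eventBy P e) → (α ++ β) ∈ 𝒜 →
    ∀ (i : Fin n) (w : Bool), HasDecided A input C (α ++ β) i w → w = v

/-- The set of processes `P` is bivalent in the execution `α` from `C` with respect to `𝒜`. -/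
def BivalentIn (A : Algorithm n) (input : Fin n → Bool) (C : Config A)
    (𝒜 : Set (List (Event n))) (P : Set (Fin n)) (α : List (Event n)) : Prop :=
  ∀ v : Bool, ∃ β : List (Event n), (∀ e ∈ β, eventBy P e) ∧ (α ++ β) ∈ 𝒜 ∧
    ∃ i : Fin n, HasDecided A input C (α ++ β) i v

/-- `P` is univalent in `α` with respect to `𝒜`: `v`-univalent for some `v`. -/
def UnivalentIn (A : Algorithm n) (input : Fin n → Bool) (C : Config A)
    (𝒜 : Set (List (Event n))) (P : Set (Fin n)) (α : List (Event n)) : Prop :=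
  ∃ v : Bool, VUnivalentIn A input C 𝒜 P α v

/-- `α ∈ 𝒜` is critical with respect to `𝒜`: `α` is bivalent with respect to `𝒜` and every
nonempty extension of `α` inside `𝒜` is univalent with respect to `𝒜`. -/
def Critical (A : Algorithm n) (input : Fin n → Bool) (C : Config A)
    (𝒜 : Set (List (Event n))) (α : List (Event n)) : Prop :=
  α ∈ 𝒜 ∧ BivalentIn A input C 𝒜 Set.univ α ∧
  ∀ β : List (Event n), β ≠ [] → (α ++ β) ∈ 𝒜 → UnivalentIn A input C 𝒜 Set.univ (α ++ β)

/-- Process `i` is on team `v` in `Cα` (with respect to `𝒜`): `α p_i` is `v`-univalent. -/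
def OnTeam (A : Algorithm n) (input : Fin n → Bool) (C : Config A)
    (𝒜 : Set (List (Event n))) (α : List (Event n)) (i : Fin n) (v : Bool) : Prop :=
  VUnivalentIn A input C 𝒜 Set.univ (α ++ [Event.step i]) v

/-- Process `i` is poised to apply an operation to object `O` in configuration `C`. -/
def PoisedAt (A : Algorithm n) (C : Config A) (i : Fin n) (O : A.ObjIdx) : Prop :=
  ∃ op, A.pending i (C.pstate i) = some ⟨O, op⟩

/-- `σ ∈ 𝒮(P)`: a crash-free schedule in which each process of `P` takes at most one step
and no other process takes a step. -/
def IsSched (P : Set (Fin n)) (σ : List (Event n)) : Prop :=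
  ∃ l : List (Fin n), l.Nodup ∧ (∀ j ∈ l, j ∈ P) ∧ σ = l.map Event.step

/-- The schedule `λ_k = c_k c_{k+1} ⋯ c_{n-1}`. -/
def lambdaSched (n k : ℕ) : List (Event n) :=
  ((List.finRange n).filter fun j => decide (k ≤ j.val)).map Event.crash

/-- `U_v`: the set of values of object `O` reachable from `Dα` by a schedule in `𝒮(𝒫)`
whose first process is on team `v`. -/
def USetCfg (A : Algorithm n) (input : Fin n → Bool) (D : Config A)
    (𝒜 : Set (List (Event n))) (α : List (Event n)) (O : A.ObjIdx) (v : Bool) :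
    Set (A.objType O).Value :=
  { w | ∃ (j : Fin n) (σ : List (Event n)), OnTeam A input D 𝒜 α j v ∧
        IsSched {k : Fin n | k ≠ j} σ ∧
        w = (run A input D (α ++ Event.step j :: σ)).oval O }

/-- The configuration `Dα` is `v`-hiding. -/
def VHiding (A : Algorithm n) (input : Fin n → Bool) (D : Config A)
    (𝒜 : Set (List (Event n))) (α : List (Event n)) (O : A.ObjIdx) (v : Bool) : Prop :=
  USetCfg A input D 𝒜 α O false ∩ USetCfg A input D 𝒜 α O true = ∅ ∧
  (run A input D α).oval O ∈ USetCfg A input D 𝒜 α O v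

/-- The configuration `Dα` is `n`-recording. -/
def NRecordingCfg (A : Algorithm n) (input : Fin n → Bool) (D : Config A)
    (𝒜 : Set (List (Event n))) (α : List (Event n)) (O : A.ObjIdx) : Prop :=
  USetCfg A input D 𝒜 α O false ∩ USetCfg A input D 𝒜 α O true = ∅ ∧
  ∀ v : Bool, (run A input D α).oval O ∈ USetCfg A input D 𝒜 α O v →
    ∃! j : Fin n, OnTeam A input D 𝒜 α j (!v)

/-- Apply the operations `o i` of the processes listed in `σ`, in order, to an object of type
`T`, starting from the value `u`. -/
def applyOps (T : DetType) (o : Fin n → T.Op) : T.Value → List (Fin n) → T.Value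
  | u, [] => u
  | u, i :: σ => applyOps T o (T.δ u (o i)).2 σ

/-- `U_x`: the set of values obtainable by applying the operations of the processes of a
duplicate-free schedule whose first process is on team `x` to an object with initial value
`u`. -/
def UVals (T : DetType) (o : Fin n → T.Op) (u : T.Value) (team : Fin n → Bool) (x : Bool) :
    Set T.Value :=
  { v | ∃ (i : Fin n) (σ : List (Fin n)), team i = x ∧ (i :: σ).Nodup ∧
        v = applyOps T o u (i :: σ) }

/-- A deterministic type `T` is `n`-recording. -/
def NRecording (n : ℕ) (T : DetType) : Prop :=
  ∃ (u : T.Value) (team : Fin n → Bool) (o : Fin n → T.Op),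
    (∀ x : Bool, ∃ i, team i = x) ∧
    (UVals T o u team false ∩ UVals T o u team true = ∅) ∧
    (∀ x : Bool, u ∈ UVals T o u team x → ∃! i, team i = !x)

end RecoverableConsensus

namespace RecoverableConsensus

/-! ### Runs, reachability and solo executions -/

section Basics

variable {n : ℕ} {A : Algorithm n} {input : Fin n → Bool}

lemma run_append (C : Config A) (σ τ : List (Event n)) :
    run A input C (σ ++ τ) = run A input (run A input C σ) τ := by
  induction σ generalizing C with
  | nil => rfl
  | cons e σ ih => simp [run, ih]

/-- The process performing an event. -/
def Event.proc : Event n → Fin n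
  | .step i => i
  | .crash i => i

lemma applyEvent_pstate_of_ne (C : Config A) (e : Event n) (j : Fin n) (h : e.proc ≠ j) :
    (applyEvent A input C e).pstate j = C.pstate j := by
  cases e with
  | crash i => simp only [Event.proc] at h; simp [applyEvent, Function.update_of_ne h.symm]
  | step i =>
    simp only [Event.proc] at h
    simp only [applyEvent]
    split
    · rfl
    · simp [Function.update_of_ne h.symm]

lemma run_pstate_of_ne (C : Config A) (σ : List (Event n)) (j : Fin n)
    (h : ∀ e ∈ σ, e.proc ≠ j) : (run A input C σ).pstate j = C.pstate j := by
  induction σ generalizing C with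
  | nil => rfl
  | cons e σ ih =>
    simp only [run]
    rw [ih _ (fun e' he' => h e' (by simp [he'])), applyEvent_pstate_of_ne _ _ _ (h e (by simp))]

/-- An event by `p_i` acts in the same way on two configurations that agree on all objects and on
the states of a set `P` of processes containing `p_i`. -/
lemma applyEvent_congr {C C' : Config A} {P : Set (Fin n)} (ho : C.oval = C'.oval)
    (hp : ∀ j ∈ P, C.pstate j = C'.pstate j) (e : Event n) (he : eventBy P e) :
    (applyEvent A input C e).oval = (applyEvent A input C' e).oval ∧
      ∀ j ∈ P, (applyEvent A input C e).pstate j = (applyEvent A input C' e).pstate j := by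
  obtain ⟨p, o⟩ := C
  obtain ⟨p', o'⟩ := C'
  simp only at ho hp
  subst ho
  cases e with
  | crash i =>
    refine ⟨rfl, fun j hj => ?_⟩
    by_cases hij : j = i
    · subst hij; simp [applyEvent]
    · simp [applyEvent, Function.update_of_ne hij, hp j hj]
  | step i =>
    have hi := hp i he
    simp only [applyEvent, hi]
    split
    · exact ⟨rfl, hp⟩
    · refine ⟨rfl, fun j hj => ?_⟩
      by_cases hij : j = i
      · subst hij; simp
      · simp [Function.update_of_ne hij, hp j hj]

lemma run_congr {C C' : Config A} {P : Set (Fin n)} (ho : C.oval = C'.oval)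
    (hp : ∀ j ∈ P, C.pstate j = C'.pstate j) (σ : List (Event n)) (hσ : ∀ e ∈ σ, eventBy P e) :
    (run A input C σ).oval = (run A input C' σ).oval ∧
      ∀ j ∈ P, (run A input C σ).pstate j = (run A input C' σ).pstate j := by
  induction σ generalizing C C' with
  | nil => exact ⟨ho, hp⟩
  | cons e σ ih =>
    obtain ⟨h1, h2⟩ := applyEvent_congr (input := input) ho hp e (hσ e (by simp))
    exact ih h1 h2 (fun e' he' => hσ e' (by simp [he']))

lemma applyEvent_step_of_pending_none (C : Config A) (i : Fin n)
    (h : A.pending i (C.pstate i) = none) : applyEvent A input C (.step i) = C := by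
  simp only [applyEvent, h]

/-- A process in an output state stays in this state as long as it does not crash. -/
lemma run_pstate_of_output (C : Config A) (σ : List (Event n)) (i : Fin n) (v : Bool)
    (hσ : Event.crash i ∉ σ) (h : A.output i (C.pstate i) = some v) :
    (run A input C σ).pstate i = C.pstate i := by
  induction σ generalizing C with
  | nil => rfl
  | cons e σ ih =>
    have key : (applyEvent A input C e).pstate i = C.pstate i := by
      by_cases he : e.proc = i
      · cases e with
        | crash j => simp only [Event.proc] at he; subst he; simp at hσ
        | step j =>
          simp only [Event.proc] at he
          subst he
          rw [applyEvent_step_of_pending_none]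
          exact A.output_noop _ _ (by simp [h])
      · exact applyEvent_pstate_of_ne _ _ _ he
    simp only [run]
    rw [ih _ (fun h' => hσ (by simp [h'])) (by rw [key]; exact h), key]

/-- `C` is reachable from the initial configuration. -/
def Reach (A : Algorithm n) (input : Fin n → Bool) (C : Config A) : Prop :=
  ∃ σ, C = run A input (initConfig A input) σ

lemma Reach.run {C : Config A} (h : Reach A input C) (σ : List (Event n)) :
    Reach A input (run A input C σ) := by
  obtain ⟨τ, rfl⟩ := h
  exact ⟨τ ++ σ, by rw [run_append]⟩

/-- Recoverable wait-freedom for an infinite execution presented as the limit of a chain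
`σ 0 ⊑ σ 1 ⊑ ⋯` of finite executions, where `σ (k + 1)` extends `σ k` by the nonempty block
`ρ k`. -/
lemma hasDecided_of_chain (hA : RecWaitFree A) {C : Config A} {i : Fin n}
    (hC : C.pstate i = A.init i (input i)) (σ ρ : ℕ → List (Event n))
    (hσ : ∀ k, σ (k + 1) = σ k ++ ρ k) (hρ : ∀ k, ρ k ≠ [])
    (hstep : ∀ K, ∃ k, K ≤ k ∧ Event.step i ∈ ρ k)
    (hcrash : ∃ K, ∀ k, K ≤ k → Event.crash i ∉ ρ k) :
    ∃ k v, HasDecided A input C (σ k) i v := by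
  have hlen : ∀ k, k ≤ (σ k).length := by
    intro k
    induction k with
    | zero => simp
    | succ k ih =>
      have := List.length_pos_iff.mpr (hρ k)
      rw [hσ]; simp; omega
  have hpre : ∀ k d, σ k <+: σ (k + d) := by
    intro k d
    induction d with
    | zero => exact List.prefix_rfl
    | succ d ih => exact ih.trans (by rw [← add_assoc, hσ]; exact List.prefix_append _ _)
  have hpre' : ∀ k l, k ≤ l → σ k <+: σ l := by
    intro k l h
    obtain ⟨d, rfl⟩ := Nat.exists_eq_add_of_le h
    exact hpre k d
  -- the `m`-th event of the limit execution
  let e : ℕ → Event n := fun m => (σ (m + 1))[m]'(by have := hlen (m + 1); omega)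
  have he : ∀ m k (h : m < (σ k).length), e m = (σ k)[m] := by
    intro m k h
    rcases le_total (m + 1) k with hk | hk
    · exact (hpre' _ _ hk).getElem _
    · exact ((hpre' _ _ hk).getElem h).symm
  have hseg : ∀ m, initSeg e m <+: σ m := by
    intro m
    have : initSeg e m = (σ m).take m := by
      apply List.ext_getElem
      · simp [initSeg, hlen m]
      · intro j h1 h2
        simp only [initSeg, List.getElem_map, List.getElem_range, List.getElem_take]
        exact he _ _ _
    rw [this]
    exact List.take_prefix _ _
  obtain ⟨k, v, hk⟩ := hA input C e i (Or.inl hC)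
    (by
      intro m
      obtain ⟨k, hk, hmem⟩ := hstep m
      obtain ⟨p, hp, hpe⟩ := List.getElem_of_mem hmem
      refine ⟨(σ k).length + p, by have := hlen k; omega, ?_⟩
      rw [he _ (k + 1) (by rw [hσ]; simp; omega), ← hpe]
      simp [hσ])
    (by
      obtain ⟨K, hK⟩ := hcrash
      refine ⟨(σ K).length, fun m hm hme => ?_⟩
      have hex : ∃ k, m < (σ k).length := ⟨m + 1, by have := hlen (m + 1); omega⟩
      have h1 := Nat.find_spec hex
      have hpos : K < Nat.find hex := by
        by_contra hcon
        have := (hpre' _ _ (not_lt.mp hcon)).length_le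
        omega
      obtain ⟨k, hk⟩ : ∃ k, Nat.find hex = k + 1 := ⟨Nat.find hex - 1, by omega⟩
      have h2 : (σ k).length ≤ m := not_lt.mp (Nat.find_min hex (by omega))
      rw [hk] at h1
      apply hK k (by omega)
      rw [← hme, he m (k + 1) h1]
      simp only [hσ]
      rw [List.getElem_append_right h2]
      exact List.getElem_mem _)
  exact ⟨k, v, initSeg e k, hseg k, hk⟩

/-- Process `p_i`, running alone and without crashes from `C`, decides `v`. -/
def Solo (A : Algorithm n) (input : Fin n → Bool) (i : Fin n) (C : Config A) (v : Bool) : Prop :=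
  ∃ k, A.output i ((run A input C (List.replicate k (Event.step i))).pstate i) = some v

/-- In a reachable configuration, every process decides when running alone. -/
lemma exists_solo (hA : RecWaitFree A) {C : Config A} (hC : Reach A input C) (i : Fin n) :
    ∃ v, Solo A input i C v := by
  -- cut the history at the last crash of `p_i`
  have hlive : ∃ (C0 : Config A) (σ : List (Event n)), C0.pstate i = A.init i (input i) ∧
      Event.crash i ∉ σ ∧ C = run A input C0 σ := by
    obtain ⟨σ, rfl⟩ := hC
    induction σ using List.reverseRecOn with
    | nil => exact ⟨initConfig A input, [], rfl, by simp, rfl⟩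
    | append_singleton σ e ih =>
      obtain ⟨C0, τ, h0, h1, h2⟩ := ih
      by_cases he : e = Event.crash i
      · subst he
        exact ⟨run A input (initConfig A input) (σ ++ [Event.crash i]), [],
          by simp [run_append, run, applyEvent], by simp, rfl⟩
      · exact ⟨C0, τ ++ [e], h0, by simp [h1, Ne.symm he],
          by rw [run_append, run_append, h2]⟩
  obtain ⟨C0, σ, h0, h1, rfl⟩ := hlive
  obtain ⟨k, v, τ, ⟨τ', hτ⟩, hv⟩ := hasDecided_of_chain hA h0
    (fun k => σ ++ List.replicate k (Event.step i)) (fun _ => [Event.step i])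
    (by intro k; simp [List.replicate_succ']) (by simp)
    (fun K => ⟨K, le_rfl, by simp⟩) ⟨0, by simp⟩
  refine ⟨v, k, ?_⟩
  rw [← run_append, ← hτ, run_append, run_pstate_of_output _ _ _ v _ hv]
  · exact hv
  · intro hmem
    have : Event.crash i ∈ σ ++ List.replicate k (Event.step i) := by rw [← hτ]; simp [hmem]
    simp [h1] at this

lemma Solo.congr {C C' : Config A} {i : Fin n} {v : Bool} (h : Solo A input i C v)
    (ho : C.oval = C'.oval) (hp : C.pstate i = C'.pstate i) : Solo A input i C' v := by
  obtain ⟨k, hk⟩ := h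
  refine ⟨k, ?_⟩
  have := (run_congr (input := input) (P := {i}) ho (by simpa using hp)
    (List.replicate k (Event.step i))
    (by intro e he; rw [List.eq_of_mem_replicate he]; exact rfl)).2 i rfl
  rwa [← this]

lemma Solo.step {C : Config A} {i : Fin n} {v : Bool} (h : Solo A input i C v) :
    Solo A input i (applyEvent A input C (.step i)) v := by
  obtain ⟨k, hk⟩ := h
  refine ⟨k, ?_⟩
  have h1 : run A input (applyEvent A input C (.step i)) (List.replicate k (Event.step i)) =
      run A input (run A input C (List.replicate k (Event.step i))) [Event.step i] := by
    rw [← run_append, ← List.replicate_succ', List.replicate_succ]; rfl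
  rw [h1, run_pstate_of_output _ _ _ v (by simp) hk]
  exact hk

lemma Solo.of_step {C : Config A} {i : Fin n} {v : Bool}
    (h : Solo A input i (applyEvent A input C (.step i)) v) : Solo A input i C v := by
  obtain ⟨k, hk⟩ := h
  exact ⟨k + 1, hk⟩

lemma run_crashes (C : Config A) (l : List (Fin n)) :
    (run A input C (l.map Event.crash)).oval = C.oval ∧
      ∀ j, (run A input C (l.map Event.crash)).pstate j =
        if j ∈ l then A.init j (input j) else C.pstate j := by
  induction l generalizing C with
  | nil => simp [run]
  | cons i l ih =>
    obtain ⟨h1, h2⟩ := ih (applyEvent A input C (.crash i))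
    refine ⟨h1, fun j => ?_⟩
    simp only [List.map_cons, run]
    rw [h2]
    by_cases hj : j ∈ l
    · simp [hj]
    · by_cases hij : j = i
      · subst hij; simp [applyEvent]
      · simp [hj, hij, applyEvent]

lemma run_lambdaSched_oval (C : Config A) (k : ℕ) :
    (run A input C (lambdaSched n k)).oval = C.oval :=
  (run_crashes C _).1

lemma run_lambdaSched_pstate (C : Config A) (k j : Fin n) :
    (run A input C (lambdaSched n k)).pstate j =
      if k ≤ j then A.init j (input j) else C.pstate j := by
  rw [lambdaSched, (run_crashes C _).2]
  simp

lemma eventBy_lambdaSched (k : Fin n) : ∀ e ∈ lambdaSched n k, eventBy (Set.Ici k) e := by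
  intro e he
  simp only [lambdaSched, List.mem_map, List.mem_filter, decide_eq_true_eq] at he
  obtain ⟨j, hj, rfl⟩ := he
  exact hj.2

end Basics

/-! ### Crash budgets and valency -/

section Valency

variable {n : ℕ} {A : Algorithm n} {input : Fin n → Bool}

/-- `Leg e b b'`: with the crash budget `b`, the event `e` is legal and may leave the budget `b'`.
A crash of `p_i` consumes a unit of the budget of `p_i`; a step of `p_i` allows the budgets of the
processes `p_j` with `j > i` to be reset to arbitrary values.  Budgets may always be lowered. -/
def Leg : Event n → (Fin n → ℕ) → (Fin n → ℕ) → Prop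
  | .step i, b, b' => ∀ j ≤ i, b' j ≤ b j
  | .crash i, b, b' => b' i < b i ∧ ∀ j, b' j ≤ b j

/-- `Can A input v C b`: some process is in an output state for `v` after some sequence of events
that is legal from `C` with the crash budget `b`. -/
inductive Can (A : Algorithm n) (input : Fin n → Bool) (v : Bool) :
    Config A → (Fin n → ℕ) → Prop
  | dec {C : Config A} {b : Fin n → ℕ} (i : Fin n) :
      A.output i (C.pstate i) = some v → Can A input v C b
  | event {C : Config A} {b : Fin n → ℕ} (e : Event n) (b' : Fin n → ℕ) :
      Leg e b b' → Can A input v (applyEvent A input C e) b' → Can A input v C b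

/-- Both values can still be decided from `C` with the crash budget `b`. -/
def Biv (A : Algorithm n) (input : Fin n → Bool) (C : Config A) (b : Fin n → ℕ) : Prop :=
  ∀ v, Can A input v C b

/-- The value `v` can be decided from `C` with the crash budget `b` after a first step by
`p_i`. -/
def CanStep (A : Algorithm n) (input : Fin n → Bool) (v : Bool) (C : Config A) (b : Fin n → ℕ)
    (i : Fin n) : Prop :=
  ∃ c, Leg (.step i) b c ∧ Can A input v (applyEvent A input C (.step i)) c

/-- A bivalent pair (configuration, budget) all of whose legal successors are univalent. -/
def Crit (A : Algorithm n) (input : Fin n → Bool) (C : Config A) (b : Fin n → ℕ) : Prop :=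
  Biv A input C b ∧ ∀ e b', Leg e b b' → ¬ Biv A input (applyEvent A input C e) b'

lemma Leg.mono {e : Event n} {b c b' : Fin n → ℕ} (h : Leg e b b') (hbc : b ≤ c) :
    Leg e c b' := by
  cases e with
  | step i => exact fun j hj => (h j hj).trans (hbc j)
  | crash i => exact ⟨h.1.trans_le (hbc i), fun j => (h.2 j).trans (hbc j)⟩

lemma Can.mono {v : Bool} {C : Config A} {b c : Fin n → ℕ} (h : Can A input v C b)
    (hbc : b ≤ c) : Can A input v C c := by
  cases h with
  | dec i h => exact .dec i h
  | event e b' hl h => exact .event e b' (hl.mono hbc) h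

lemma Can.exists_run {v : Bool} {C : Config A} {b : Fin n → ℕ} (h : Can A input v C b) :
    ∃ ρ i, A.output i ((run A input C ρ).pstate i) = some v := by
  induction h with
  | dec i h => exact ⟨[], i, h⟩
  | event e b' _ _ ih =>
    obtain ⟨ρ, i, h⟩ := ih
    exact ⟨e :: ρ, i, h⟩

/-- Agreement, between a decision in the history and a decision still possible. -/
lemma Can.eq_of_hasDecided (hA : Agreement A) {v w : Bool} {σ : List (Event n)}
    {b : Fin n → ℕ} {i : Fin n} (hd : HasDecided A input (initConfig A input) σ i v)
    (hc : Can A input w (run A input (initConfig A input) σ) b) : v = w := by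
  obtain ⟨ρ, j, hj⟩ := hc.exists_run
  obtain ⟨τ, hτ, hi⟩ := hd
  refine hA input (σ ++ ρ) i j v w ⟨τ, hτ.trans (List.prefix_append _ _), hi⟩
    ⟨σ ++ ρ, List.prefix_rfl, ?_⟩
  rwa [run_append]

lemma Can.eq_of_output (hA : Agreement A) {v w : Bool} {C : Config A} (hC : Reach A input C)
    {b : Fin n → ℕ} {i : Fin n} (hd : A.output i (C.pstate i) = some v)
    (hc : Can A input w C b) : v = w := by
  obtain ⟨σ, rfl⟩ := hC
  exact hc.eq_of_hasDecided hA ⟨σ, List.prefix_rfl, hd⟩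

/-- A run is legal as soon as the initial budgets of the crashing processes are large. -/
lemma can_of_run {v : Bool} {i : Fin n} (ρ : List (Event n)) {C : Config A} {b : Fin n → ℕ}
    (hb : ∀ j, Event.crash j ∈ ρ → ρ.length ≤ b j)
    (h : A.output i ((run A input C ρ).pstate i) = some v) : Can A input v C b := by
  induction ρ generalizing C b with
  | nil => exact .dec i h
  | cons e ρ ih =>
    cases e with
    | step j =>
      refine .event (.step j) b (fun _ _ => le_rfl) (ih (fun l hl => ?_) h)
      have := hb l (by simp [hl])
      simp at this
      omega
    | crash j =>
      refine .event (.crash j) (fun l => b l - 1) ⟨?_, fun l => Nat.sub_le _ _⟩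
        (ih (fun l hl => ?_) h)
      · have := hb j (by simp)
        simp at this
        simp only
        omega
      · have := hb l (by simp [hl])
        simp at this
        omega

/-- After the steps `h :: t`, the budget of every process beyond a member `m` of this schedule is
arbitrary. -/
lemma canStep_of_can {v : Bool} {C : Config A} {b b' : Fin n → ℕ} {h m : Fin n}
    {t : List (Fin n)} (hm : m ∈ h :: t) (hb : ∀ j ≤ m, b' j ≤ b j)
    (hc : Can A input v (run A input C ((h :: t).map Event.step)) b') :
    CanStep A input v C b h := by
  induction t generalizing C b h m with
  | nil =>
    simp only [List.mem_singleton] at hm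
    subst hm
    exact ⟨b', hb, hc⟩
  | cons h' t ih =>
    have key : ∃ b1, Leg (.step h) b b1 ∧ ∃ m' ∈ h' :: t, ∀ j ≤ m', b' j ≤ b1 j := by
      rcases List.mem_cons.mp hm with rfl | hm'
      · exact ⟨b', hb, h', by simp, fun _ _ => le_rfl⟩
      · exact ⟨b, fun _ _ => le_rfl, m, hm', hb⟩
    obtain ⟨b1, hl, m', hm', hb'⟩ := key
    obtain ⟨b2, h2, h3⟩ := ih (C := applyEvent A input C (.step h)) hm' hb' hc
    exact ⟨b1, hl, .event _ b2 h2 h3⟩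

/-- After the steps `h :: t`, every process beyond a member `m` of this schedule may crash any
number of times. -/
lemma canStep_of_run {v : Bool} {C : Config A} (b : Fin n → ℕ) {h m i : Fin n}
    {t : List (Fin n)} (hm : m ∈ h :: t) (ρ : List (Event n))
    (hρ : ∀ j, Event.crash j ∈ ρ → m < j)
    (hv : A.output i ((run A input (run A input C ((h :: t).map Event.step)) ρ).pstate i) =
      some v) :
    CanStep A input v C b h := by
  refine canStep_of_can (b' := fun j => if j ≤ m then b j else ρ.length) hm (by
    intro j hj; simp [hj]) (can_of_run ρ (fun j hj => ?_) hv)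
  simp [not_le.mpr (hρ j hj)]

lemma canStep_of_solo {v : Bool} {C : Config A} (b : Fin n → ℕ) {h i : Fin n}
    {t : List (Fin n)}
    (hs : Solo A input i (run A input C ((h :: t).map Event.step)) v) :
    CanStep A input v C b h := by
  obtain ⟨k, hk⟩ := hs
  refine canStep_of_run b (m := h) (by simp) _ (fun j hj => ?_) hk
  have := List.eq_of_mem_replicate hj
  simp at this

lemma canStep_of_crash_solo {v : Bool} {C : Config A} (b : Fin n → ℕ) {h m i : Fin n}
    {t : List (Fin n)} (hm : m ∈ h :: t) (hmi : m < i)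
    (hs : Solo A input i (applyEvent A input (run A input C ((h :: t).map Event.step))
      (.crash i)) v) :
    CanStep A input v C b h := by
  obtain ⟨k, hk⟩ := hs
  refine canStep_of_run b hm (Event.crash i :: List.replicate k (Event.step i))
    (fun j hj => ?_) hk
  rcases List.mem_cons.mp hj with hj | hj
  · cases hj; exact hmi
  · have := List.eq_of_mem_replicate hj
    simp at this

lemma can_of_solo {v : Bool} {C : Config A} (b : Fin n → ℕ) {i : Fin n}
    (hs : Solo A input i C v) : Can A input v C b := by
  obtain ⟨k, hk⟩ := hs
  refine can_of_run _ (fun j hj => ?_) hk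
  have := List.eq_of_mem_replicate hj
  simp at this

/-- A process that decides `v` alone from `C` still does so after its first step, so this step can
lead to `v`. -/
lemma Solo.canStep {v : Bool} {C : Config A} (b : Fin n → ℕ) {i : Fin n}
    (hs : Solo A input i C v) : CanStep A input v C b i :=
  ⟨b, fun _ _ => le_rfl, can_of_solo b hs.step⟩

/-- In a critical configuration, the valency after a step by `p_i` is well defined: `p_i` belongs
to exactly one team. -/
lemma Crit.not_canStep {C : Config A} {b : Fin n → ℕ} (hc : Crit A input C b) {i : Fin n}
    {v : Bool} (h : CanStep A input v C b i) : ¬ CanStep A input (!v) C b i := by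
  rintro ⟨b2, hb2, h2⟩
  obtain ⟨b1, hb1, h1⟩ := h
  refine hc.2 (.step i) (b1 ⊔ b2) (fun j hj => sup_le (hb1 j hj) (hb2 j hj)) ?_
  intro w
  by_cases hw : w = v
  · subst hw; exact h1.mono le_sup_left
  · have : w = !v := by cases w <;> cases v <;> simp_all
    subst this; exact h2.mono le_sup_right

/-- A process whose step leads to `!v`-univalence decides `!v` when running alone. -/
lemma solo_of_not_canStep (hA : RecWaitFree A) {C : Config A} (hC : Reach A input C)
    {b : Fin n → ℕ} {i : Fin n} {v : Bool} (h : ¬ CanStep A input v C b i) :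
    Solo A input i C (!v) := by
  obtain ⟨w, hw⟩ := exists_solo hA hC i
  have : w ≠ v := by
    rintro rfl
    exact h (hw.canStep b)
  have : w = !v := by cases w <;> cases v <;> simp_all
  exact this ▸ hw

lemma exists_canStep (hA : RecWaitFree A) {C : Config A} (hC : Reach A input C)
    (b : Fin n → ℕ) (i : Fin n) : ∃ v, CanStep A input v C b i := by
  obtain ⟨w, hw⟩ := exists_solo hA hC i
  exact ⟨w, hw.canStep b⟩

end Valency

/-! ### Well-foundedness of bivalent extensions -/

section WellFounded

variable {n : ℕ} {A : Algorithm n} {input : Fin n → Bool}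

/-- `Move s s'`: the pair `s'` (configuration, budget) is obtained from `s` either by a block of
events that contains a step of some `p_i` (the payer) and in which only processes `p_j` with
`j > i` crash, or by a single legal crash.  In the first case the crashes of the block need not be
covered by the budget, even when they precede the step of the payer. -/
def Move (A : Algorithm n) (input : Fin n → Bool) (s s' : Config A × (Fin n → ℕ)) : Prop :=
  ∃ ρ : List (Event n), s'.1 = run A input s.1 ρ ∧
    ((∃ i, Event.step i ∈ ρ ∧ (∀ j, Event.crash j ∈ ρ → i < j) ∧ ∀ j ≤ i, s'.2 j ≤ s.2 j) ∨
      ∃ i, ρ = [Event.crash i] ∧ s'.2 i < s.2 i ∧ ∀ j, s'.2 j ≤ s.2 j)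

/-- A uniform bound for finitely many properties of natural numbers that hold eventually. -/
lemma exists_uniform_bound {P : Fin n → ℕ → Prop}
    (h : ∀ i, ∃ K, ∀ k, K ≤ k → P i k) : ∃ K, ∀ i k, K ≤ k → P i k := by
  choose K hK using h
  exact ⟨Finset.univ.sup K, fun i k hk =>
    hK i k ((Finset.le_sup (f := K) (Finset.mem_univ i)).trans hk)⟩

/-- An infinite sequence of moves would contain infinitely many steps and only finitely many
crashes of the smallest process that pays infinitely often; this process would decide,
contradicting bivalence. -/
lemma no_infinite_moves (hA : Agreement A) (hW : RecWaitFree A)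
    (s : ℕ → Config A × (Fin n → ℕ)) (h0 : Reach A input (s 0).1)
    (hbiv : ∀ k, Biv A input (s k).1 (s k).2) (hmove : ∀ k, Move A input (s k) (s (k + 1))) :
    False := by
  choose ρ hρ hcase using hmove
  obtain ⟨σ0, hσ0⟩ := h0
  let σ : ℕ → List (Event n) := fun k => Nat.rec σ0 (fun k τ => τ ++ ρ k) k
  have hσ : ∀ k, σ (k + 1) = σ k ++ ρ k := fun k => rfl
  have hs : ∀ k, (s k).1 = run A input (initConfig A input) (σ k) := by
    intro k
    induction k with
    | zero => exact hσ0
    | succ k ih => rw [hρ, hσ, run_append, ih]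
  have hne : ∀ k, ρ k ≠ [] := by
    intro k hk
    rcases hcase k with ⟨i, hi, _⟩ | ⟨i, hi, _⟩
    · simp [hk] at hi
    · simp [hk] at hi
  let Pay : Fin n → ℕ → Prop := fun i k => Event.step i ∈ ρ k ∧
    (∀ j, Event.crash j ∈ ρ k → i < j) ∧ ∀ j ≤ i, (s (k + 1)).2 j ≤ (s k).2 j
  -- some process pays infinitely often, since otherwise the total budget would decrease forever
  have hex : ∃ i, ∀ K, ∃ k, K ≤ k ∧ Pay i k := by
    by_contra hcon
    push Not at hcon
    obtain ⟨K, hK⟩ := exists_uniform_bound (P := fun i k => ¬ Pay i k) hcon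
    have hdec : ∀ k, (∑ j, (s (K + k + 1)).2 j) < ∑ j, (s (K + k)).2 j := by
      intro k
      rcases hcase (K + k) with ⟨i, hi⟩ | ⟨i, _, h1, h2⟩
      · exact absurd hi (hK i _ (by omega))
      · exact Finset.sum_lt_sum (fun j _ => h2 j) ⟨i, Finset.mem_univ i, h1⟩
    have hle : ∀ k, (∑ j, (s (K + k)).2 j) + k ≤ ∑ j, (s K).2 j := by
      intro k
      induction k with
      | zero => simp
      | succ k ih => have := hdec k; rw [← add_assoc K k 1]; omega
    have := hle (∑ j, (s K).2 j + 1)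
    omega
  obtain ⟨i, hi, hmin⟩ := wellFounded_lt.has_min {i : Fin n | ∀ K, ∃ k, K ≤ k ∧ Pay i k} hex
  obtain ⟨K, hK⟩ : ∃ K, ∀ j, ∀ k, K ≤ k → j < i → ¬ Pay j k := by
    apply exists_uniform_bound
    intro j
    by_cases hj : j < i
    · have := mt (hmin j) (not_not.mpr hj)
      simp only [Set.mem_ofPred_eq] at this
      push Not at this
      obtain ⟨K, hK⟩ := this
      exact ⟨K, fun k hk _ => hK k hk⟩
    · exact ⟨0, fun k _ h => absurd h hj⟩
  -- from `K` on, the budget of `p_i` never increases, and it decreases at each crash of `p_i`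
  have hmono : ∀ k, K ≤ k → (s (k + 1)).2 i ≤ (s k).2 i ∧
      (Event.crash i ∈ ρ k → (s (k + 1)).2 i < (s k).2 i) := by
    intro k hk
    rcases hcase k with ⟨j, hj⟩ | ⟨j, h1, h2, h3⟩
    · have hij : i ≤ j := not_lt.mp fun h => hK j k hk h hj
      exact ⟨hj.2.2 i hij, fun hc => absurd (hj.2.1 i hc) (not_lt.mpr hij)⟩
    · refine ⟨h3 i, fun hc => ?_⟩
      rw [h1] at hc
      simp at hc
      subst hc
      exact h2
  have hfin : ∃ L, ∀ k, L ≤ k → Event.crash i ∉ ρ k := by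
    obtain ⟨_, ⟨L, hL, rfl⟩, hLmin⟩ := wellFounded_lt.has_min
      {x : ℕ | ∃ k, K ≤ k ∧ (s k).2 i = x} ⟨_, K, le_rfl, rfl⟩
    have hanti : ∀ d, (s (L + d)).2 i ≤ (s L).2 i := by
      intro d
      induction d with
      | zero => exact le_rfl
      | succ d ih => exact ((hmono (L + d) (by omega)).1).trans ih
    refine ⟨L, fun k hk hc => ?_⟩
    obtain ⟨d, rfl⟩ := Nat.exists_eq_add_of_le hk
    exact hLmin _ ⟨L + d + 1, by omega, rfl⟩
      (((hmono (L + d) (by omega)).2 hc).trans_le (hanti d))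
  obtain ⟨k, v, hk⟩ := hasDecided_of_chain hW (C := initConfig A input) (i := i) rfl σ ρ hσ hne
    (fun K => by
      obtain ⟨k, hk, hp⟩ := hi K
      exact ⟨k, hk, hp.1⟩) hfin
  have h1 := hbiv k (!v)
  rw [hs] at h1
  have := h1.eq_of_hasDecided hA hk
  simp at this

/-- Every nonempty set of reachable bivalent pairs contains one without a move inside the set. -/
lemma exists_no_move (hA : Agreement A) (hW : RecWaitFree A)
    (S : Set (Config A × (Fin n → ℕ))) (hS : S.Nonempty)
    (hS' : ∀ s ∈ S, Reach A input s.1 ∧ Biv A input s.1 s.2) :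
    ∃ s ∈ S, ∀ s' ∈ S, ¬ Move A input s s' := by
  by_contra hcon
  push Not at hcon
  choose! f hf hm using hcon
  obtain ⟨s0, h0⟩ := hS
  have hmem : ∀ k, f^[k] s0 ∈ S := by
    intro k
    induction k with
    | zero => exact h0
    | succ k ih => rw [Function.iterate_succ_apply']; exact hf _ ih
  refine no_infinite_moves hA hW (fun k => f^[k] s0) (hS' _ (hmem 0)).1
    (fun k => (hS' _ (hmem k)).2) (fun k => ?_)
  have := hm _ (hmem k)
  simpa only [Function.iterate_succ_apply'] using this

lemma move_of_leg {C : Config A} {e : Event n} {b b' : Fin n → ℕ} (h : Leg e b b') :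
    Move A input (C, b) (applyEvent A input C e, b') := by
  refine ⟨[e], rfl, ?_⟩
  cases e with
  | step i => exact Or.inl ⟨i, by simp, by simp, h⟩
  | crash i => exact Or.inr ⟨i, rfl, h.1, h.2⟩

end WellFounded

/-! ### Critical configurations -/

section Critical

variable {n : ℕ} {A : Algorithm n} {input : Fin n → Bool}

/-- Both teams of a critical configuration are nonempty.  The first event of an execution deciding
`v` may be a crash, but `p_0` (here `z`) does not notice it, so that `p_0` is then on team `v`. -/
lemma exists_team (hA : Agreement A) (hW : RecWaitFree A) {C : Config A} {b : Fin n → ℕ}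
    (hC : Reach A input C) (hc : Crit A input C b) {z : Fin n} (hbz : b z = 0) (v : Bool) :
    ∃ i, CanStep A input v C b i := by
  cases hc.1 v with
  | dec i h =>
    have := (hc.1 (!v)).eq_of_output hA hC h
    simp at this
  | event e b' hl h =>
    cases e with
    | step i => exact ⟨i, b', hl, h⟩
    | crash i =>
      have hiz : i ≠ z := by
        rintro rfl
        have := hl.1
        omega
      obtain ⟨w, hw⟩ := exists_solo hW (hC.run [Event.crash i]) z
      by_cases hwv : w = v
      · subst hwv
        exact ⟨z, (hw.congr (C' := C) rfl (applyEvent_pstate_of_ne _ (.crash i) _ hiz)).canStep b⟩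
      · exfalso
        refine hc.2 _ _ hl fun u => ?_
        by_cases huv : u = v
        · exact huv ▸ h
        · have : u = w := by cases u <;> cases v <;> cases w <;> simp_all
          exact this ▸ can_of_solo b' hw

lemma steps_comm (C : Config A) {i j : Fin n} (hij : i ≠ j)
    (h : ¬ ∃ O opi opj, A.pending i (C.pstate i) = some ⟨O, opi⟩ ∧
      A.pending j (C.pstate j) = some ⟨O, opj⟩) :
    applyEvent A input (applyEvent A input C (.step i)) (.step j) =
      applyEvent A input (applyEvent A input C (.step j)) (.step i) := by
  rcases hi : A.pending i (C.pstate i) with _ | ⟨o, op⟩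
  · rw [applyEvent_step_of_pending_none C i hi, applyEvent_step_of_pending_none _ i]
    rw [applyEvent_pstate_of_ne _ _ _ (by simpa [Event.proc] using hij.symm)]
    exact hi
  rcases hj : A.pending j (C.pstate j) with _ | ⟨o', op'⟩
  · rw [applyEvent_step_of_pending_none C j hj, applyEvent_step_of_pending_none _ j]
    rw [applyEvent_pstate_of_ne _ _ _ (by simpa [Event.proc] using hij)]
    exact hj
  have ho : o ≠ o' := by
    rintro rfl
    exact h ⟨o, op, op', hi, hj⟩
  let : DecidableEq A.ObjIdx := Classical.decEq _
  simp only [applyEvent, hi, hj, Function.update_of_ne hij, Function.update_of_ne hij.symm,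
    Function.update_of_ne ho, Function.update_of_ne ho.symm]
  rw [Function.update_comm hij.symm, Function.update_comm ho.symm]

/-- Processes of different teams are poised at the same object, since otherwise their steps
commute. -/
lemma same_object (hW : RecWaitFree A) {C : Config A} {b : Fin n → ℕ}
    (hC : Reach A input C) {x : Bool} {i j : Fin n}
    (hi : ¬ CanStep A input x C b i) (hj : ¬ CanStep A input (!x) C b j) :
    ∃ O opi opj, A.pending i (C.pstate i) = some ⟨O, opi⟩ ∧
      A.pending j (C.pstate j) = some ⟨O, opj⟩ := by
  by_contra hcon
  have hij : i ≠ j := by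
    rintro rfl
    obtain ⟨v, hv⟩ := exists_canStep hW hC b i
    cases v <;> cases x <;> simp_all
  have hcomm : run A input C ([i, j].map Event.step) = run A input C ([j, i].map Event.step) :=
    steps_comm (input := input) C hij hcon
  obtain ⟨w, hw⟩ := exists_solo hW (hC.run ([i, j].map Event.step)) i
  have h1 := canStep_of_solo b hw
  rw [hcomm] at hw
  have h2 := canStep_of_solo b hw
  cases w <;> cases x <;> simp_all

/-- When all processes of a schedule are poised at `O`, the schedule acts on the value of `O` by
`applyOps` and leaves all other objects alone. -/
lemma run_steps_oval (C : Config A) (O : A.ObjIdx) (op : Fin n → (A.objType O).Op)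
    (l : List (Fin n)) (hl : l.Nodup)
    (hp : ∀ m ∈ l, A.pending m (C.pstate m) = some ⟨O, op m⟩) :
    (run A input C (l.map Event.step)).oval O = applyOps (A.objType O) op (C.oval O) l ∧
      ∀ o, o ≠ O → (run A input C (l.map Event.step)).oval o = C.oval o := by
  induction l generalizing C with
  | nil => exact ⟨rfl, fun _ _ => rfl⟩
  | cons i l ih =>
    obtain ⟨hil, hl⟩ := List.nodup_cons.mp hl
    have hi := hp i (by simp)
    obtain ⟨h1, h2⟩ := ih (applyEvent A input C (.step i)) hl (fun m hm => by
      rw [applyEvent_pstate_of_ne]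
      · exact hp m (by simp [hm])
      · rintro rfl; exact hil hm)
    have h3 : (applyEvent A input C (.step i)).oval O =
        ((A.objType O).δ (C.oval O) (op i)).2 := by
      simp [applyEvent, hi]
    refine ⟨?_, fun o ho => ?_⟩
    · simp only [List.map_cons, run, applyOps]
      rw [h1, h3]
    · simp only [List.map_cons, run]
      rw [h2 o ho]
      simp [applyEvent, hi, ho]

/-- The first obstruction: some schedule containing `p_0` (`z`) and starting on the team opposite
to that of `p_{n-1}` (`l`) leaves the objects as a single step by `p_{n-1}` does. -/
def Merging (A : Algorithm n) (input : Fin n → Bool) (z l : Fin n) (C : Config A)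
    (b : Fin n → ℕ) : Prop :=
  ∃ x h t, z ∈ h :: t ∧ ¬ CanStep A input x C b h ∧ ¬ CanStep A input (!x) C b l ∧
    (run A input C ((h :: t).map Event.step)).oval =
      (applyEvent A input C (.step l)).oval

/-- The second obstruction: some schedule starting on team `x` leaves the objects unchanged, and
the other team has at least two members. -/
def Hiding (A : Algorithm n) (input : Fin n → Bool) (C : Config A) (b : Fin n → ℕ)
    (x : Bool) : Prop :=
  ∃ h t i₀ i₁, i₀ < i₁ ∧ ¬ CanStep A input (!x) C b h ∧ ¬ CanStep A input x C b i₀ ∧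
    ¬ CanStep A input x C b i₁ ∧
    (run A input C ((h :: t).map Event.step)).oval = C.oval

/-- Two schedules starting on different teams, each containing a process other than `p_{n-1}`
(`l`), cannot lead to the same object values: `p_{n-1}` could crash after both. -/
lemma not_both_lt (hW : RecWaitFree A) {C : Config A} {b : Fin n → ℕ}
    (hC : Reach A input C) {x : Bool} {l h₀ h₁ m₀ m₁ : Fin n} {t₀ t₁ : List (Fin n)}
    (hh₀ : ¬ CanStep A input x C b h₀) (hh₁ : ¬ CanStep A input (!x) C b h₁)
    (heq : (run A input C ((h₀ :: t₀).map Event.step)).oval =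
      (run A input C ((h₁ :: t₁).map Event.step)).oval)
    (hm₀ : m₀ ∈ h₀ :: t₀) (hml₀ : m₀ < l) (hm₁ : m₁ ∈ h₁ :: t₁) (hml₁ : m₁ < l) : False := by
  obtain ⟨w, hw⟩ := exists_solo hW
    ((hC.run ((h₀ :: t₀).map Event.step)).run [Event.crash l]) l
  have h1 := canStep_of_crash_solo b hm₀ hml₀ hw
  have h2 := canStep_of_crash_solo b hm₁ hml₁ (hw.congr
    (C' := applyEvent A input (run A input C ((h₁ :: t₁).map Event.step)) (.crash l)) heq
    (by simp [run, applyEvent]))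
  cases w <;> cases x <;> simp_all

lemma merging_of_mem (hW : RecWaitFree A) {C : Config A} {b : Fin n → ℕ}
    (hC : Reach A input C) {x : Bool} {z l h₀ h₁ : Fin n} {t₀ t₁ : List (Fin n)}
    (hl : ∀ j, j ≤ l) (hzl : z < l)
    (hh₀ : ¬ CanStep A input x C b h₀) (hh₁ : ¬ CanStep A input (!x) C b h₁)
    (hn₁ : (h₁ :: t₁).Nodup)
    (heq : (run A input C ((h₀ :: t₀).map Event.step)).oval =
      (run A input C ((h₁ :: t₁).map Event.step)).oval)
    (hz : z ∈ h₀ :: t₀) : Merging A input z l C b := by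
  have hall : ∀ m ∈ h₁ :: t₁, m = l := by
    intro m hm
    by_contra hne
    exact not_both_lt hW hC hh₀ hh₁ heq hz hzl hm (lt_of_le_of_ne (hl m) hne)
  obtain rfl := hall h₁ (by simp)
  obtain rfl : t₁ = [] := by
    rcases t₁ with _ | ⟨a, t⟩
    · rfl
    · have := hall a (by simp)
      simp [this] at hn₁
  exact ⟨x, h₀, t₀, hz, hh₀, hh₁, heq⟩

lemma merging_of_eq (hW : RecWaitFree A) {C : Config A} {b : Fin n → ℕ}
    (hC : Reach A input C) {x : Bool} {z l h₀ h₁ : Fin n} {t₀ t₁ : List (Fin n)}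
    (hl : ∀ j, j ≤ l) (hzl : z < l)
    (hh₀ : ¬ CanStep A input x C b h₀) (hh₁ : ¬ CanStep A input (!x) C b h₁)
    (hn₀ : (h₀ :: t₀).Nodup) (hn₁ : (h₁ :: t₁).Nodup)
    (heq : (run A input C ((h₀ :: t₀).map Event.step)).oval =
      (run A input C ((h₁ :: t₁).map Event.step)).oval) :
    Merging A input z l C b := by
  by_cases hz₀ : z ∈ h₀ :: t₀
  · exact merging_of_mem hW hC hl hzl hh₀ hh₁ hn₁ heq hz₀
  by_cases hz₁ : z ∈ h₁ :: t₁
  · exact merging_of_mem hW hC hl hzl hh₁ (by simpa using hh₀) hn₀ heq.symm hz₁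
  -- `p_0` takes no step in either schedule, hence cannot distinguish their outcomes
  exfalso
  have hst : ∀ s : List (Fin n), z ∉ s →
      (run A input C (s.map Event.step)).pstate z = C.pstate z := by
    intro s hs
    refine run_pstate_of_ne _ _ _ fun e he => ?_
    obtain ⟨m, hm, rfl⟩ := List.mem_map.mp he
    rintro rfl
    exact hs hm
  obtain ⟨w, hw⟩ := exists_solo hW (hC.run ((h₀ :: t₀).map Event.step)) z
  have h1 := canStep_of_solo b hw
  have h2 := canStep_of_solo b (hw.congr heq (by rw [hst _ hz₀, hst _ hz₁]))
  cases w <;> cases x <;> simp_all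

/-- A critical configuration exhibits an `n`-recording type unless one of the two obstructions
occurs. -/
lemma Crit.cases (hA : Agreement A) (hW : RecWaitFree A) {C : Config A} {b : Fin n → ℕ}
    (hC : Reach A input C) (hc : Crit A input C b) {z l : Fin n} (hbz : b z = 0)
    (hl : ∀ j, j ≤ l) (hzl : z < l) :
    (∃ O, NRecording n (A.objType O)) ∨ Merging A input z l C b ∨
      ∃ x, Hiding A input C b x := by
  classical
  let team : Fin n → Bool := fun i => decide (CanStep A input true C b i)
  have hteam : ∀ i x, team i = x ↔ ¬ CanStep A input (!x) C b i := by
    intro i x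
    obtain ⟨v, hv⟩ := exists_canStep hW hC b i
    have := hc.not_canStep hv
    cases x <;> cases v <;> simp_all [team]
  have hne : ∀ x, ∃ i, team i = x := by
    intro x
    obtain ⟨i, hi⟩ := exists_team hA hW hC hc hbz x
    exact ⟨i, (hteam i x).mpr (hc.not_canStep hi)⟩
  have hobj : ∀ i j, team i ≠ team j → ∃ O opi opj, A.pending i (C.pstate i) = some ⟨O, opi⟩ ∧
      A.pending j (C.pstate j) = some ⟨O, opj⟩ := by
    intro i j hij
    have hi := (hteam i _).mp rfl
    have hj : ¬ CanStep A input (!!team i) C b j := (hteam j _).mp (by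
      cases h1 : team i <;> cases h2 : team j <;> simp_all)
    exact same_object hW hC hi hj
  obtain ⟨i₀, hi₀⟩ := hne false
  obtain ⟨i₁, hi₁⟩ := hne true
  obtain ⟨O, op₀, op₁, hp₀, hp₁⟩ := hobj i₀ i₁ (by simp [hi₀, hi₁])
  have hpend : ∀ m, ∃ op, A.pending m (C.pstate m) = some ⟨O, op⟩ := by
    intro m
    cases hm : team m with
    | false =>
      obtain ⟨O', op, op', h1, h2⟩ := hobj m i₁ (by simp [hm, hi₁])
      rw [hp₁] at h2
      cases h2
      exact ⟨op, h1⟩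
    | true =>
      obtain ⟨O', op, op', h1, h2⟩ := hobj m i₀ (by simp [hm, hi₀])
      rw [hp₀] at h2
      cases h2
      exact ⟨op, h1⟩
  choose op hop using hpend
  by_cases hM : Merging A input z l C b
  · exact Or.inr (Or.inl hM)
  by_cases hH : ∃ x, Hiding A input C b x
  · exact Or.inr (Or.inr hH)
  refine Or.inl ⟨O, C.oval O, team, op, hne, ?_, ?_⟩
  · rw [Set.eq_empty_iff_forall_notMem]
    rintro w ⟨⟨h₀, t₀, ht₀, hn₀, hw₀⟩, ⟨h₁, t₁, ht₁, hn₁, hw₁⟩⟩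
    apply hM
    refine merging_of_eq hW hC hl hzl ((hteam _ _).mp ht₀) ((hteam _ _).mp ht₁) hn₀ hn₁ ?_
    obtain ⟨a₀, a₁⟩ := run_steps_oval (input := input) C O op _ hn₀ (fun m _ => hop m)
    obtain ⟨b₀, b₁⟩ := run_steps_oval (input := input) C O op _ hn₁ (fun m _ => hop m)
    funext o
    by_cases ho : o = O
    · subst ho; rw [a₀, b₀, ← hw₀, ← hw₁]
    · rw [a₁ o ho, b₁ o ho]
  · rintro x ⟨h, t, ht, hn, hu⟩
    by_contra hcon
    apply hH
    obtain ⟨j, hj⟩ := hne (!x)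
    obtain ⟨j', hj', hjj'⟩ : ∃ j', team j' = !x ∧ j' ≠ j := by
      by_contra hall
      push Not at hall
      exact hcon ⟨j, hj, hall⟩
    have hrun : (run A input C ((h :: t).map Event.step)).oval = C.oval := by
      obtain ⟨a₀, a₁⟩ := run_steps_oval (input := input) C O op _ hn (fun m _ => hop m)
      funext o
      by_cases ho : o = O
      · subst ho; rw [a₀, ← hu]
      · rw [a₁ o ho]
    have hj1 := (hteam _ _).mp hj
    have hj1' := (hteam _ _).mp hj'
    rw [Bool.not_not] at hj1 hj1'
    rcases lt_or_gt_of_ne hjj' with hlt | hlt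
    · exact ⟨x, h, t, j', j, hlt, (hteam _ _).mp ht, hj1', hj1, hrun⟩
    · exact ⟨x, h, t, j, j', hlt, (hteam _ _).mp ht, hj1, hj1', hrun⟩

end Critical

/-! ### Removing the obstructions -/

section Obstructions

variable {n : ℕ} {A : Algorithm n} {input : Fin n → Bool}

/-- No execution from `C` by the processes `p_k, …, p_{n-1}`, with arbitrarily many crashes, leads
one of them to decide `v`. -/
def NoDec (A : Algorithm n) (input : Fin n → Bool) (v : Bool) (k : Fin n) (C : Config A) : Prop :=
  ∀ ρ : List (Event n), (∀ e ∈ ρ, eventBy (Set.Ici k) e) → ∀ i, k ≤ i →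
    A.output i ((run A input C ρ).pstate i) ≠ some v

lemma NoDec.run {v : Bool} {k : Fin n} {C : Config A} (h : NoDec A input v k C)
    (σ : List (Event n)) (hσ : ∀ e ∈ σ, eventBy (Set.Ici k) e) :
    NoDec A input v k (run A input C σ) := by
  intro ρ hρ i hi
  rw [← run_append]
  refine h _ (fun e he => ?_) i hi
  rcases List.mem_append.mp he with he | he
  exacts [hσ e he, hρ e he]

lemma NoDec.congr {v : Bool} {k : Fin n} {C C' : Config A} (h : NoDec A input v k C)
    (ho : C.oval = C'.oval) (hp : ∀ j, k ≤ j → C.pstate j = C'.pstate j) :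
    NoDec A input v k C' := by
  intro ρ hρ i hi
  rw [← (run_congr (input := input) (P := Set.Ici k) ho hp ρ hρ).2 i hi]
  exact h ρ hρ i hi

lemma NoDec.not_solo {v : Bool} {k i : Fin n} {C : Config A} (h : NoDec A input v k C)
    (hi : k ≤ i) : ¬ Solo A input i C v := by
  rintro ⟨m, hm⟩
  refine h _ (fun e he => ?_) i hi hm
  rw [List.eq_of_mem_replicate he]
  exact hi

/-- A schedule containing some `p_m` with `m < k` gives unlimited crashes to `p_k, …, p_{n-1}`. -/
lemma noDec_of_not_canStep {v : Bool} {C : Config A} {b : Fin n → ℕ} {h m k : Fin n}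
    {t : List (Fin n)} (hh : ¬ CanStep A input v C b h) (hm : m ∈ h :: t) (hmk : m < k) :
    NoDec A input v k (run A input C ((h :: t).map Event.step)) := by
  intro ρ hρ i _ hv
  exact hh (canStep_of_run b hm ρ (fun j hj => lt_of_lt_of_le hmk (hρ _ hj)) hv)

lemma biv_of_solo {C : Config A} (b : Fin n → ℕ) {i j : Fin n} {v : Bool}
    (hi : Solo A input i C v) (hj : Solo A input j C (!v)) : Biv A input C b := by
  intro w
  by_cases hw : w = v
  · exact hw ▸ can_of_solo b hi
  · have : w = !v := by cases w <;> cases v <;> simp_all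
    exact this ▸ can_of_solo b hj

lemma NoDec.solo (hW : RecWaitFree A) {v : Bool} {k i : Fin n} {C : Config A}
    (h : NoDec A input v k C) (hC : Reach A input C) (hi : k ≤ i) : Solo A input i C (!v) := by
  obtain ⟨w, hw⟩ := exists_solo hW hC i
  have h1 : w ≠ v := by rintro rfl; exact h.not_solo hi hw
  have : w = !v := by cases w <;> cases v <;> simp_all
  exact this ▸ hw

/-- Suppose that a schedule starting on team `x` hides itself and that `i₀ < i₁` are on the other
team.  After crashing `p_{i₁}, …, p_{n-1}`, the processes `p_{i₁}, …, p_{n-1}` by themselves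
decide only `x`, whereas `p_{i₀}` running alone decides `!x`. -/
lemma hiding_step (hW : RecWaitFree A) {C : Config A} {b : Fin n → ℕ} (hC : Reach A input C)
    {x : Bool} {h i₀ i₁ : Fin n} {t : List (Fin n)} (h01 : i₀ < i₁)
    (hh : ¬ CanStep A input (!x) C b h) (hi₀ : ¬ CanStep A input x C b i₀)
    (hrun : (run A input C ((h :: t).map Event.step)).oval = C.oval) :
    NoDec A input (!x) i₁ (run A input C (lambdaSched n i₁)) ∧
      Biv A input (run A input C (lambdaSched n i₁)) 0 := by
  have hs := solo_of_not_canStep hW hC hi₀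
  have hm : ∃ m ∈ h :: t, m < i₁ := by
    by_contra hcon
    push Not at hcon
    have hne : i₀ ∉ h :: t := fun hmem => absurd h01 (not_lt.mpr (hcon _ hmem))
    refine hh (canStep_of_solo b (t := t) (hs.congr hrun.symm ?_))
    refine (run_pstate_of_ne _ _ _ fun e he => ?_).symm
    obtain ⟨m, hm, rfl⟩ := List.mem_map.mp he
    rintro rfl
    exact hne hm
  obtain ⟨m, hm, hmi⟩ := hm
  have hno : NoDec A input (!x) i₁ (run A input C (lambdaSched n i₁)) := by
    refine ((noDec_of_not_canStep hh hm hmi).run (lambdaSched n i₁)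
      (eventBy_lambdaSched i₁)).congr ?_ ?_
    · rw [run_lambdaSched_oval, run_lambdaSched_oval, hrun]
    · intro j hj
      rw [run_lambdaSched_pstate, run_lambdaSched_pstate, if_pos hj, if_pos hj]
  refine ⟨hno, biv_of_solo 0 (i := i₀) (j := i₁) (v := !x) ?_
    (hno.solo hW (hC.run _) le_rfl)⟩
  refine hs.congr (run_lambdaSched_oval _ _).symm ?_
  rw [run_lambdaSched_pstate, if_neg (not_le.mpr h01)]

/-- The bivalent pairs reached from `C` by events of `p_k, …, p_{n-1}`, with no budget for the
other processes, from which `p_k, …, p_{n-1}` by themselves cannot decide `v`. -/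
def Restricted (A : Algorithm n) (input : Fin n → Bool) (C : Config A) (k : Fin n) (v : Bool) :
    Set (Config A × (Fin n → ℕ)) :=
  {s | (∃ ρ : List (Event n), (∀ e ∈ ρ, eventBy (Set.Ici k) e) ∧ s.1 = run A input C ρ) ∧
    (∀ j, j < k → s.2 j = 0) ∧ NoDec A input v k s.1 ∧ Biv A input s.1 s.2}

/-- The descent on `k`.  Here `(C, b)` admits no move to a bivalent pair in which
`p_0` (`z`) has no budget.  A pair of `Restricted A input C k v` without a move inside this set is
critical: a step by some `p_i` with `i < k` pays for everything that happened since `C`.  At such a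
pair the first obstruction is impossible, and the second one leads to a smaller `k`. -/
lemma nRecording_of_restricted (hA : Agreement A) (hW : RecWaitFree A) {C : Config A}
    {b : Fin n → ℕ} (hC : Reach A input C) {z l : Fin n} (hz : ∀ j, z ≤ j) (hl : ∀ j, j ≤ l)
    (hmin : ∀ s', Biv A input s'.1 s'.2 → s'.2 z = 0 → ¬ Move A input (C, b) s')
    (k : Fin n) (v : Bool) (hzk : z < k) (hne : (Restricted A input C k v).Nonempty) :
    ∃ O, NRecording n (A.objType O) := by
  induction k using WellFoundedLT.induction generalizing v with
  | ind k ih =>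
  have hkl := hl k
  obtain ⟨⟨D, c⟩, ⟨⟨ρ, hρ, hD⟩, hc0, hno, hbiv⟩, hD'⟩ := exists_no_move (input := input) hA hW
    (Restricted A input C k v) hne (by
      rintro s ⟨⟨ρ, _, hs⟩, _, _, hb⟩
      exact ⟨hs ▸ hC.run ρ, hb⟩)
  simp only at hD hc0 hno hbiv
  have hRD : Reach A input D := hD ▸ hC.run ρ
  have hcrit : Crit A input D c := by
    refine ⟨hbiv, fun e c' hleg hb => ?_⟩
    by_cases he : eventBy (Set.Ici k) e
    · refine hD' (applyEvent A input D e, c') ⟨⟨ρ ++ [e], ?_, ?_⟩, ?_, ?_, hb⟩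
        (move_of_leg hleg)
      · intro e' he'
        rcases List.mem_append.mp he' with he' | he'
        · exact hρ e' he'
        · rw [List.mem_singleton.mp he']; exact he
      · rw [run_append, ← hD]; rfl
      · intro j hj
        have h0 := hc0 j hj
        have : c' j ≤ c j := by
          cases e with
          | step i => exact hleg j (hj.le.trans he)
          | crash i => exact hleg.2 j
        simp only
        omega
      · exact hno.run [e] (by simpa using he)
    · cases e with
      | crash i =>
        have := hc0 i (not_le.mp he)
        have := hleg.1
        omega
      | step i =>
        have hik : i < k := not_le.mp he
        have hc' : ∀ j ≤ i, c' j = 0 := by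
          intro j hj
          have h1 := hleg j hj
          have h2 := hc0 j (hj.trans_lt hik)
          omega
        refine hmin (applyEvent A input D (.step i), c') hb (hc' z (hz i))
          ⟨ρ ++ [.step i], by rw [run_append, ← hD]; rfl, Or.inl ⟨i, by simp, ?_, ?_⟩⟩
        · intro j hj
          simp only [List.mem_append, List.mem_singleton, reduceCtorEq, or_false] at hj
          exact hik.trans_le (hρ _ hj)
        · intro j hj
          exact (hc' j hj).trans_le (Nat.zero_le _)
  -- processes that cannot lead to `!v` by their first step are below `k`
  have hlt : ∀ i, ¬ CanStep A input (!v) D c i → i < k := by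
    intro i hi
    by_contra hki
    exact hi ((hno.solo hW hRD (not_lt.mp hki)).canStep c)
  rcases hcrit.cases hA hW hRD (hc0 z hzk) hl (hzk.trans_le hkl) with
    hrec | ⟨x, h, t, hzm, hh, hlx, heq⟩ | ⟨x, h, t, i₀, i₁, h01, hh, hi₀, hi₁, hrun⟩
  · exact hrec
  · exfalso
    have hxv : x = !v := by
      have h1 := hno.not_solo hkl
      have h2 := solo_of_not_canStep hW hRD hlx
      rw [Bool.not_not] at h2
      cases x <;> cases v <;> simp_all
    subst hxv
    obtain ⟨w, hw⟩ := exists_solo hW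
      ((hRD.run ((h :: t).map Event.step)).run [Event.crash l]) l
    have h1 := canStep_of_crash_solo c hzm (hzk.trans_le hkl) hw
    have hwv : w = v := by cases w <;> cases v <;> simp_all
    subst hwv
    refine (hno.run [.step l, .crash l] ?_).not_solo hkl (hw.congr heq (by simp [run, applyEvent]))
    simp [eventBy, hkl]
  · by_cases hxv : x = v
    · exfalso
      subst hxv
      obtain ⟨w, hw⟩ := exists_solo hW
        ((hRD.run ((h :: t).map Event.step)).run [Event.crash l]) l
      have h1 := canStep_of_crash_solo c (m := h) (by simp) ((hlt h hh).trans_le hkl) hw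
      have hwv : w = x := by cases w <;> cases x <;> simp_all
      subst hwv
      refine (hno.run [.crash l] ?_).not_solo hkl (hw.congr hrun (by simp [run, applyEvent]))
      simp [eventBy, hkl]
    · have hxv' : x = !v := by cases x <;> cases v <;> simp_all
      subst hxv'
      have h1k := hlt i₁ hi₁
      obtain ⟨hno', hbiv'⟩ := hiding_step hW hRD h01 hh hi₀ hrun
      rw [Bool.not_not] at hno'
      refine ih i₁ h1k v ((hz i₀).trans_lt h01)
        ⟨(run A input D (lambdaSched n i₁), 0), ⟨ρ ++ lambdaSched n i₁, ?_, ?_⟩,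
          fun _ _ => rfl, hno', hbiv'⟩
      · intro e he
        rcases List.mem_append.mp he with he | he
        · have := hρ e he
          cases e <;> exact h1k.le.trans this
        · exact eventBy_lambdaSched i₁ e he
      · rw [run_append, ← hD]

/-- The outcome of a solo execution depends on no input but that of the running process, so by
validity it is that input. -/
lemma solo_init (hV : Validity A) (hW : RecWaitFree A) (i : Fin n) :
    Solo A input i (initConfig A input) (input i) := by
  have hrun : ∀ (k : ℕ) (C : Config A),
      run A (fun _ => input i) C (List.replicate k (Event.step i)) =
        run A input C (List.replicate k (Event.step i)) := by
    intro k
    induction k with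
    | zero => intro C; rfl
    | succ k ih => intro C; exact ih _
  obtain ⟨v, k, hk⟩ := exists_solo hW (input := fun _ => input i)
    (C := initConfig A fun _ => input i) ⟨[], rfl⟩ i
  obtain ⟨j, rfl⟩ := hV _ (List.replicate k (Event.step i)) i v ⟨_, List.prefix_rfl, hk⟩
  rw [hrun] at hk
  exact Solo.congr (C := initConfig A fun _ => input i) ⟨k, hk⟩ rfl rfl

lemma exists_nRecording (hA : Agreement A) (hV : Validity A) (hW : RecWaitFree A)
    {z l : Fin n} (hz : ∀ j, z ≤ j) (hl : ∀ j, j ≤ l) (hzl : z < l) :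
    ∃ O, NRecording n (A.objType O) := by
  let input : Fin n → Bool := fun i => decide (i ≠ z)
  obtain ⟨⟨C, b⟩, ⟨hC, hbiv, hbz⟩, hmin⟩ := exists_no_move (input := input) hA hW
    {s | Reach A input s.1 ∧ Biv A input s.1 s.2 ∧ s.2 z = 0}
    ⟨(initConfig A input, 0), ⟨[], rfl⟩, by
      have h1 := solo_init (input := input) hV hW z
      have h2 := solo_init (input := input) hV hW l
      have e1 : input z = false := by simp [input]
      have e2 : input l = !false := by simp [input, hzl.ne']
      rw [e1] at h1
      rw [e2] at h2
      exact biv_of_solo 0 h1 h2, rfl⟩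
    (fun s hs => ⟨hs.1, hs.2.1⟩)
  simp only at hC hbiv hbz
  have hmin' : ∀ s', Biv A input s'.1 s'.2 → s'.2 z = 0 → ¬ Move A input (C, b) s' := by
    intro s' h1 h2 hm
    refine hmin s' ⟨?_, h1, h2⟩ hm
    obtain ⟨ρ, hρ, _⟩ := hm
    exact hρ ▸ hC.run ρ
  have hcrit : Crit A input C b := by
    refine ⟨hbiv, fun e b' hleg hb => hmin' (_, b') hb ?_ (move_of_leg hleg)⟩
    have : b' z ≤ b z := by
      cases e with
      | step i => exact hleg z (hz i)
      | crash i => exact hleg.2 z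
    simp only
    omega
  rcases hcrit.cases hA hW hC hbz hl hzl with
    hrec | ⟨x, h, t, hzm, hh, hlx, heq⟩ | ⟨x, h, t, i₀, i₁, h01, hh, hi₀, hi₁, hrun⟩
  · exact hrec
  · -- crash `p_{n-1}` right after its step
    have hno : NoDec A input x l (run A input C [.step l, .crash l]) := by
      refine ((noDec_of_not_canStep hh hzm hzl).run [.crash l] (by simp [eventBy])).congr
        heq ?_
      intro j hj
      obtain rfl := le_antisymm hj (hl j)
      simp [run, applyEvent]
    have hs : Solo A input z (run A input C [.step l, .crash l]) x := by
      obtain ⟨w, hw⟩ := exists_solo hW (hC.run [.step l]) z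
      have h1 : CanStep A input w C b l := canStep_of_solo b (t := []) hw
      have hwx : w = x := by cases w <;> cases x <;> simp_all
      subst hwx
      exact hw.congr rfl (applyEvent_pstate_of_ne _ (.crash l) _ hzl.ne').symm
    exact nRecording_of_restricted hA hW hC hz hl hmin' l x hzl
      ⟨(run A input C [.step l, .crash l], 0), ⟨_, by simp [eventBy], rfl⟩, fun _ _ => rfl, hno,
        biv_of_solo 0 hs (hno.solo hW (hC.run _) le_rfl)⟩
  · obtain ⟨hno, hbiv'⟩ := hiding_step hW hC h01 hh hi₀ hrun
    exact nRecording_of_restricted hA hW hC hz hl hmin' i₁ (!x) ((hz i₀).trans_lt h01)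
      ⟨(run A input C (lambdaSched n i₁), 0), ⟨_, eventBy_lambdaSched i₁, rfl⟩,
        fun _ _ => rfl, hno, hbiv'⟩

end Obstructions

end RecoverableConsensus

open RecoverableConsensus in
/-- If there exists a recoverable wait-free binary consensus algorithm for
`n > 1` processes using objects of deterministic types `𝒯_0, 𝒯_1, 𝒯_2, …`, then at least one
of the types `𝒯_k` is `n`-recording. -/
theorem nRecording_of_recoverable_consensus
    (n : ℕ) (hn : 1 < n) (T : ℕ → DetType) (A : Algorithm n)
    (hT : ∀ o : A.ObjIdx, ∃ k : ℕ, A.objType o = T k)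
    (hA : SolvesRecConsensus A) :
    ∃ k : ℕ, NRecording n (T k) := by
  obtain ⟨hAg, hV, hW⟩ := hA
  obtain ⟨O, hO⟩ := exists_nRecording hAg hV hW (z := ⟨0, by omega⟩) (l := ⟨n - 1, by omega⟩)
    (fun j => by simp [Fin.le_def]) (fun j => by rw [Fin.le_def]; simp only; omega)
    (by rw [Fin.lt_def]; simp only; omega)
  obtain ⟨k, hk⟩ := hT O
  exact ⟨k, hk ▸ hO⟩
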